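/- arXiv:1801.07179 — 6 statements merged into one kernel-verified Lean document; each statement's English description precedes it below -/
import Mathlib

section
/- If the quadrinomial X^15 + X^8 + X^6 + 1 divides a Littlewood polynomial L, then deg L ≥ 32765. -/
open Polynomial

/-- A Littlewood polynomial: a nonzero integer polynomial all of whose
coefficients (up to its degree) are `-1` or `1`. -/
def IsLittlewood (P : Polynomial ℤ) : Prop :=
  P ≠ 0 ∧ ∀ i ≤ P.natDegree, P.coeff i = 1 ∨ P.coeff i = -1

/-- In characteristic two, every root of this polynomial, the quotient of
`X ^ 15 + X ^ 8 + X ^ 6 + 1` by `X + 1`, has order `2 ^ 14 - 1`. -/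
theorem orderOf_root_eq {R : Type*} [CommRing R] [Nontrivial R] {a : R}
    (h2 : (2 : R) = 0)
    (h : a ^ 14 + a ^ 13 + a ^ 12 + a ^ 11 + a ^ 10 + a ^ 9 + a ^ 8 + a ^ 5 + a ^ 4 + a ^ 3
      + a ^ 2 + a + 1 = 0) :
    orderOf a = 16383 := by
  have h16 : a ^ 16 = a ^ 9 + a ^ 7 + a := by
    linear_combination (a ^ 2 + a) * h + (-a ^ 15 - a ^ 14 - a ^ 13 - a ^ 12 - a ^ 11 - a ^ 10
      - a ^ 9 - a ^ 7 - a ^ 6 - a ^ 5 - a ^ 4 - a ^ 3 - a ^ 2 - a) * h2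
  have h32 : a ^ 32 = a ^ 13 + a ^ 12 + a ^ 10 + a ^ 8 + a ^ 5 + a ^ 4 + a + 1 := by
    rw [show a ^ 32 = (a ^ 16) ^ 2 by ring, h16]
    linear_combination (a ^ 4 + a ^ 3 + 1) * h + (-a ^ 17 - a ^ 15 - a ^ 14 - 2 * a ^ 13
      - 2 * a ^ 12 - a ^ 11 - a ^ 9 - a ^ 8 - a ^ 7 - a ^ 6 - 2 * a ^ 5 - 2 * a ^ 4 - a ^ 3 - a
      - 1) * h2
  have h64 : a ^ 64 = a ^ 13 + a ^ 12 + a ^ 7 + a ^ 6 + a ^ 5 + a ^ 4 + a ^ 2 + a := by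
    rw [show a ^ 64 = (a ^ 32) ^ 2 by ring, h32]
    linear_combination (a ^ 12 + a ^ 11 + a ^ 10 + a ^ 9 + a ^ 6 + a ^ 4 + a ^ 2 + 1) * h
      + (-a ^ 24 - a ^ 23 - a ^ 22 - a ^ 21 - a ^ 20 - 2 * a ^ 19 - a ^ 16 - 2 * a ^ 15
      - 2 * a ^ 14 - a ^ 13 - 2 * a ^ 12 - 2 * a ^ 11 - a ^ 10 - 2 * a ^ 7 - a ^ 6 - a ^ 4 - a ^ 3
      - a ^ 2) * h2
  have h128 : a ^ 128 = a ^ 13 + a ^ 12 + a ^ 10 + a ^ 8 + a ^ 6 + a ^ 5 + a ^ 4 + a ^ 3 + a := by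
    rw [show a ^ 128 = (a ^ 64) ^ 2 by ring, h64]
    linear_combination (a ^ 12 + a ^ 11 + a ^ 10 + a ^ 9 + a ^ 5 + a ^ 4 + a) * h + (-a ^ 24
      - 2 * a ^ 23 - 2 * a ^ 22 - 2 * a ^ 21 - a ^ 20 - a ^ 16 - 2 * a ^ 15 - a ^ 14 - 2 * a ^ 13
      - 2 * a ^ 12 - a ^ 10 + a ^ 8 + a ^ 7 - a ^ 5 - a ^ 4 - a) * h2
  have h256 : a ^ 256 = a ^ 13 + a ^ 7 + a ^ 5 + a ^ 4 + a ^ 2 + a + 1 := by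
    rw [show a ^ 256 = (a ^ 128) ^ 2 by ring, h128]
    linear_combination (a ^ 12 + a ^ 11 + a ^ 10 + a ^ 9 + a ^ 6 + a ^ 4 + a ^ 2 + 1) * h
      + (-a ^ 24 - a ^ 23 - a ^ 22 - a ^ 21 - a ^ 20 - a ^ 19 + a ^ 18 + a ^ 16 - a ^ 15 - a ^ 14
      - a ^ 13 - 2 * a ^ 12 - a ^ 10 + a ^ 9 - a ^ 5 - a ^ 4 - a ^ 3 - a ^ 2 - a - 1) * h2
  have h512 : a ^ 512 = a ^ 13 + a ^ 9 + a ^ 8 + a ^ 5 + a ^ 4 + a ^ 3 + a ^ 2 + a := by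
    rw [show a ^ 512 = (a ^ 256) ^ 2 by ring, h256]
    linear_combination (a ^ 12 + a ^ 11 + a ^ 5 + a ^ 4 + a ^ 3 + a ^ 2 + 1) * h + (-a ^ 25
      - a ^ 24 - a ^ 23 - a ^ 22 - a ^ 21 - a ^ 19 - a ^ 17 - 3 * a ^ 16 - 2 * a ^ 15 - 2 * a ^ 14
      - 3 * a ^ 13 - 2 * a ^ 12 - a ^ 11 - a ^ 10 - a ^ 8 - a ^ 5 - a ^ 4 - a ^ 3) * h2
  have h1024 : a ^ 1024 = a ^ 12 + a ^ 10 + a ^ 7 + a ^ 6 + a ^ 3 + a := by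
    rw [show a ^ 1024 = (a ^ 512) ^ 2 by ring, h512]
    linear_combination (a ^ 12 + a ^ 11 + a ^ 5 + a) * h + (-a ^ 25 - a ^ 24 - a ^ 23 - a ^ 20
      - a ^ 19 + a ^ 18 + a ^ 17 - a ^ 15 + a ^ 11 + a ^ 10 + a ^ 9 + a ^ 8 + a ^ 7 + a ^ 6
      + a ^ 5 + a ^ 4 - a) * h2
  have h2048 : a ^ 2048 = a ^ 8 + a ^ 4 + a ^ 3 + a ^ 2 + a := by
    rw [show a ^ 2048 = (a ^ 1024) ^ 2 by ring, h1024]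
    linear_combination (a ^ 10 + a ^ 9 + a ^ 6 + a ^ 5 + a ^ 3 + a ^ 2 + a) * h + (-a ^ 23
      - a ^ 21 - a ^ 20 - a ^ 19 - a ^ 18 - a ^ 17 - a ^ 16 - 2 * a ^ 15 - 3 * a ^ 14 - 2 * a ^ 12
      - 2 * a ^ 11 - 2 * a ^ 10 - a ^ 9 - a ^ 8 - a ^ 7 - 2 * a ^ 6 - 2 * a ^ 5 - a ^ 4
      - 2 * a ^ 3 - a ^ 2 - a) * h2
  have h4096 : a ^ 4096 = a ^ 9 + a ^ 8 + a ^ 7 + a ^ 6 + a ^ 4 + a ^ 2 + a := by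
    rw [show a ^ 4096 = (a ^ 2048) ^ 2 by ring, h2048]
    linear_combination (a ^ 2 + a) * h + (-a ^ 15 - a ^ 14 - a ^ 13 + a ^ 5 - a ^ 2 - a) * h2
  have h8192 : a ^ 8192 = a ^ 13 + a ^ 10 + a ^ 9 + a ^ 7 + a ^ 5 + 1 := by
    rw [show a ^ 8192 = (a ^ 4096) ^ 2 by ring, h4096]
    linear_combination (a ^ 4 + a ^ 3 + a ^ 2 + a + 1) * h + (-a ^ 14 - a ^ 13 - a ^ 12 + a ^ 10
      + a ^ 8 - a ^ 7 - a ^ 6 - 2 * a ^ 5 - 2 * a ^ 4 - a ^ 3 - a ^ 2 - a - 1) * h2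
  have h16384 : a ^ 16384 = a := by
    rw [show a ^ 16384 = (a ^ 8192) ^ 2 by ring, h8192]
    linear_combination (a ^ 12 + a ^ 11 + a ^ 6 + a ^ 2 + 1) * h + (-a ^ 25 - a ^ 24 - a ^ 21
      + a ^ 18 - a ^ 16 - a ^ 15 - a ^ 14 - a ^ 13 - a ^ 12 - 2 * a ^ 11 - a ^ 8 - a ^ 6 - a ^ 4
      - a ^ 3 - a ^ 2 - a) * h2
  have h129 : a ^ 129 = a ^ 12 + a ^ 10 + a ^ 8 + a ^ 7 + a ^ 6 + a ^ 3 + a + 1 := by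
    rw [show a ^ 129 = a ^ 128 * a by ring, h128]
    linear_combination h + (-a ^ 12 - a ^ 10 - a ^ 8 - a ^ 3 - a - 1) * h2
  have ne129 : a ^ 129 ≠ 1 := by
    intro hone
    refine one_ne_zero (α := R) ?_
    linear_combination (a ^ 12 + a ^ 8 + a ^ 6 + a ^ 4) * (hone - h129) - (a ^ 10 + a ^ 9 + a ^ 8
      + a ^ 7 + a ^ 5 + a + 1) * h + (a ^ 23 + a ^ 22 + 2 * a ^ 21 + a ^ 20 + 2 * a ^ 19 + a ^ 18
      + 2 * a ^ 17 + a ^ 15 + a ^ 14 + 2 * a ^ 13 + 2 * a ^ 12 + 2 * a ^ 11 + 3 * a ^ 10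
      + 2 * a ^ 9 + 2 * a ^ 8 + a ^ 6 + a ^ 5 + a ^ 4 + a ^ 3 + a ^ 2 + a + 1) * h2
  have h384 : a ^ 384 = a ^ 13 + a ^ 7 + a ^ 5 + a ^ 4 + a ^ 3 + a + 1 := by
    rw [show a ^ 384 = a ^ 256 * a ^ 128 by ring, h256, h128]
    linear_combination (a ^ 12 + a ^ 10 + a ^ 9 + a ^ 8 + a ^ 7 + a ^ 2 + a + 1) * h + (-a ^ 24
      - a ^ 23 - 2 * a ^ 22 - 2 * a ^ 21 - 2 * a ^ 20 - a ^ 19 - a ^ 18 - a ^ 16 - a ^ 15 - a ^ 14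
      - 2 * a ^ 13 - 2 * a ^ 12 - 2 * a ^ 11 - a ^ 10 - a ^ 9 + a ^ 8 + a ^ 6 - a ^ 4 - a ^ 3
      - a ^ 2 - a - 1) * h2
  have ne381 : a ^ 381 ≠ 1 := by
    intro hone
    refine one_ne_zero (α := R) ?_
    linear_combination (a ^ 13 + a ^ 12 + a ^ 9 + a ^ 6 + a ^ 5 + a ^ 4 + a + 1) * (a ^ 3 * hone
      - h384) - (a ^ 12 + a ^ 10 + a ^ 8 + a ^ 7 + a ^ 6 + a ^ 3 + a ^ 2) * h + (a ^ 24 + a ^ 23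
      + a ^ 22 + 2 * a ^ 21 + 2 * a ^ 20 + a ^ 19 + a ^ 18 + a ^ 17 + 2 * a ^ 16 + 3 * a ^ 15
      + a ^ 14 + 2 * a ^ 12 + 2 * a ^ 11 + a ^ 10 + a ^ 8 + a ^ 7 - a ^ 5 + a ^ 3 - a) * h2
  have h21 : a ^ 21 = a ^ 13 + a ^ 11 + a ^ 10 + a ^ 9 + a ^ 8 + a ^ 6 + a ^ 5 + a ^ 4 + a ^ 3
    + a ^ 2 + a + 1 := by
    rw [show a ^ 21 = a ^ 16 * a ^ 5 by ring, h16]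
    linear_combination h + (-a ^ 13 - a ^ 11 - a ^ 10 - a ^ 9 - a ^ 8 - a ^ 5 - a ^ 4
      - a ^ 3 - a ^ 2 - a - 1) * h2
  have h85 : a ^ 85 = a ^ 12 + a ^ 11 + a ^ 10 + a ^ 9 + a ^ 6 + a ^ 3 + a ^ 2 + a := by
    rw [show a ^ 85 = a ^ 64 * a ^ 21 by ring, h64, h21]
    linear_combination (a ^ 12 + a ^ 9 + a ^ 5 + a ^ 2) * h + (a ^ 18 + a ^ 17 + a ^ 16
      + 2 * a ^ 15 + a ^ 14 + a ^ 13 + a ^ 12 + a ^ 11 + a ^ 10 + a ^ 9 + 2 * a ^ 8 + 2 * a ^ 7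
      + a ^ 6 + a ^ 5 + a ^ 4) * h2
  have h341 : a ^ 341 = a ^ 11 + a ^ 10 + a ^ 8 + a ^ 5 + a ^ 4 := by
    rw [show a ^ 341 = a ^ 256 * a ^ 85 by ring, h256, h85]
    linear_combination (a ^ 11 + a ^ 7 + a ^ 3 + a ^ 2 + a) * h + (-a ^ 21 - a ^ 20 - a ^ 15
      - a ^ 12 - a ^ 11 - a ^ 5 - a ^ 4) * h2
  have h1365 : a ^ 1365 = a ^ 13 + a ^ 11 + a ^ 10 + a ^ 9 + a ^ 8 + a ^ 7 + a ^ 6 + a ^ 4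
    + a ^ 3 := by
    rw [show a ^ 1365 = a ^ 1024 * a ^ 341 by ring, h1024, h341]
    linear_combination (a ^ 9 + a ^ 6 + a ^ 3) * h + (-a ^ 19 - a ^ 13 - a ^ 10 - a ^ 9 - a ^ 8
      - a ^ 7 - a ^ 6 - a ^ 4 - a ^ 3) * h2
  have h5461 : a ^ 5461 = a ^ 10 + a ^ 8 + a ^ 7 + a ^ 6 + a ^ 3 + a ^ 2 + 1 := by
    rw [show a ^ 5461 = a ^ 4096 * a ^ 1365 by ring, h4096, h1365]
    linear_combination (a ^ 8 + a ^ 6 + a ^ 5 + a ^ 2 + a + 1) * h + (a ^ 17 + a ^ 15 + a ^ 12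
      - a ^ 10 - a ^ 9 - a ^ 8 - a ^ 7 - 2 * a ^ 6 - a ^ 5 - a ^ 4 - 2 * a ^ 3 - 2 * a ^ 2 - a
      - 1) * h2
  have ne5461 : a ^ 5461 ≠ 1 := by
    intro hone
    refine one_ne_zero (α := R) ?_
    linear_combination (a ^ 10 + a ^ 8 + a ^ 7 + a ^ 6 + a ^ 3 + a ^ 2 + 1) * (hone - h5461)
      - (a ^ 6 + a ^ 5 + a ^ 2 + a + 1) * h + (a ^ 19 + a ^ 15 + a ^ 14 + a ^ 11 + a ^ 7 + a ^ 6
      + a ^ 5 + a ^ 4 + a ^ 3 + a ^ 2 + a + 1) * h2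
  have h16383 : a ^ 16383 = 1 := by
    linear_combination (a ^ 16383 - 1) * h - (a ^ 13 + a ^ 12 + a ^ 11 + a ^ 10 + a ^ 9 + a ^ 8
      + a ^ 7 + a ^ 4 + a ^ 3 + a ^ 2 + a + 1) * h16384
  refine orderOf_eq_of_pow_and_pow_div_prime (by norm_num) h16383 fun p hp hdvd => ?_
  have hp' : p = 3 ∨ p = 43 ∨ p = 127 := by
    rw [show 16383 = 3 * 43 * 127 by norm_num, hp.dvd_mul, hp.dvd_mul,
      Nat.prime_dvd_prime_iff_eq hp (by norm_num), Nat.prime_dvd_prime_iff_eq hp (by norm_num),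
      Nat.prime_dvd_prime_iff_eq hp (by norm_num)] at hdvd
    tauto
  rcases hp' with rfl | rfl | rfl
  · exact ne5461
  · exact ne381
  · exact ne129

/-- A Littlewood polynomial that vanishes at `a` in characteristic two satisfies
`a ^ (deg + 1) = 1`, its reduction being `1 + X + ⋯ + X ^ deg`. -/
theorem IsLittlewood.pow_natDegree_add_one_eq_one {R : Type*} [CommRing R] {a : R}
    (h2 : (2 : R) = 0) {L : ℤ[X]} (hL : IsLittlewood L) (ha : aeval a L = 0) :
    a ^ (L.natDegree + 1) = 1 := by
  have hsum : ∑ i ∈ Finset.range (L.natDegree + 1), a ^ i = 0 := by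
    rw [← ha, aeval_eq_sum_range]
    refine Finset.sum_congr rfl fun i hi => ?_
    rcases hL.2 i (Finset.mem_range_succ_iff.mp hi) with h | h <;> rw [h]
    · simp
    · simp only [neg_smul, one_smul]
      linear_combination a ^ i * h2
  rw [← sub_eq_zero, ← geom_sum_mul, hsum, zero_mul]

/-- The value at `1` of a Littlewood polynomial has the parity of its number of coefficients. -/
theorem IsLittlewood.even_natDegree_add_one {L : ℤ[X]} (hL : IsLittlewood L)
    (h : (2 : ℤ) ∣ L.eval 1) : Even (L.natDegree + 1) := by
  have hcast : ((L.natDegree + 1 : ℕ) : ZMod 2) = (L.eval 1 : ℤ) := by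
    rw [eval_eq_sum_range, Int.cast_sum, ← Finset.card_range (L.natDegree + 1),
      Finset.cast_card, Finset.card_range]
    refine Finset.sum_congr rfl fun i hi => ?_
    rcases hL.2 i (Finset.mem_range_succ_iff.mp hi) with h | h <;> simp [h]
  rw [← ZMod.natCast_eq_zero_iff_even, hcast]
  exact (ZMod.intCast_zmod_eq_zero_iff_dvd _ 2).mpr (by exact_mod_cast h)

theorem exists_root_of_isAlgClosed (K : Type*) [Field K] [IsAlgClosed K] :
    ∃ a : K, a ^ 14 + a ^ 13 + a ^ 12 + a ^ 11 + a ^ 10 + a ^ 9 + a ^ 8 + a ^ 5 + a ^ 4 +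
      a ^ 3 + a ^ 2 + a + 1 = 0 := by
  let g : K[X] := X ^ 14 + X ^ 13 + X ^ 12 + X ^ 11 + X ^ 10 + X ^ 9 + X ^ 8 + X ^ 5 + X ^ 4 +
      X ^ 3 + X ^ 2 + X + 1
  have hdeg : g.degree = 14 := by
    dsimp only [g]
    compute_degree!
  obtain ⟨a, ha⟩ := IsAlgClosed.exists_root g (by rw [hdeg]; decide)
  exact ⟨a, by simpa [g] using ha⟩

theorem IsLittlewood.dvd_natDegree_add_one {K : Type*} [Field K] [IsAlgClosed K]
    (h2 : (2 : K) = 0) {L : ℤ[X]} (hL : IsLittlewood L)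
    (hdvd : (X ^ 15 + X ^ 8 + X ^ 6 + 1 : ℤ[X]) ∣ L) : 16383 ∣ L.natDegree + 1 := by
  obtain ⟨a, hg⟩ := exists_root_of_isAlgClosed K
  have hf : a ^ 15 + a ^ 8 + a ^ 6 + 1 = 0 := by
    linear_combination (a + 1) * hg - (a ^ 14 + a ^ 13 + a ^ 12 + a ^ 11 + a ^ 10 + a ^ 9 +
      a ^ 5 + a ^ 4 + a ^ 3 + a ^ 2 + a) * h2
  have hroot : aeval a L = 0 := by
    obtain ⟨Q, rfl⟩ := hdvd
    simp [hf]
  rw [← orderOf_root_eq h2 hg]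
  exact orderOf_dvd_of_pow_eq_one (hL.pow_natDegree_add_one_eq_one h2 hroot)

theorem littlewood_multiple_of_X15_X8_X6_1_has_large_degree
    (L : Polynomial ℤ) (hL : IsLittlewood L)
    (hdvd : (X ^ 15 + X ^ 8 + X ^ 6 + 1 : Polynomial ℤ) ∣ L) :
    32765 ≤ L.natDegree := by
  have heven : 2 ∣ L.natDegree + 1 := by
    refine (hL.even_natDegree_add_one ?_).two_dvd
    obtain ⟨Q, rfl⟩ := hdvd
    refine ⟨2 * Q.eval 1, ?_⟩
    simp only [eval_mul, eval_add, eval_pow, eval_X, eval_one]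
    ring
  have hord : 16383 ∣ L.natDegree + 1 :=
    hL.dvd_natDegree_add_one (K := AlgebraicClosure (ZMod 2)) CharTwo.two_eq_zero hdvd
  have hle : 2 * 16383 ≤ L.natDegree + 1 := Nat.le_of_dvd (Nat.succ_pos _)
    (Nat.Coprime.mul_dvd_of_dvd_of_dvd (by norm_num) heven hord)
  lia
end

section
/- If P ∈ ℤ[X] is a product of cyclotomic polynomials and P(1) ≠ 0, then P divides some Newman polynomial. -/
open Polynomial

/-- A Newman polynomial: an integer polynomial with all coefficients `0` or `1`
and constant term `1`. -/
def IsNewman (P : Polynomial ℤ) : Prop :=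
  P.coeff 0 = 1 ∧ ∀ i, P.coeff i = 0 ∨ P.coeff i = 1

/-- A product of cyclotomic polynomials `Φ_n`, `n ≥ 1` (possibly empty). -/
def IsCyclotomicProduct (P : Polynomial ℤ) : Prop :=
  ∃ l : List ℕ, (∀ n ∈ l, 1 ≤ n) ∧ P = (l.map fun n => cyclotomic n ℤ).prod

/-- `N * (1 + X ^ t + ⋯ + X ^ (m * t))` is Newman when `N` is Newman of degree less than `t`. -/
theorem IsNewman.mul_geom_sum {N : ℤ[X]} (hN : IsNewman N) {t : ℕ} (ht : N.natDegree < t) (m : ℕ) :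
    IsNewman (N * ∑ j ∈ Finset.range (m + 1), (X ^ t) ^ j) := by
  induction m with
  | zero => simpa using hN
  | succ m ih =>
    have hcoeff (i : ℕ) : (N * ∑ j ∈ Finset.range (m + 1 + 1), (X ^ t) ^ j).coeff i =
        if t ≤ i then (N * ∑ j ∈ Finset.range (m + 1), (X ^ t) ^ j).coeff (i - t)
        else N.coeff i := by
      rw [geom_sum_succ, mul_add, mul_one, mul_left_comm, coeff_add, coeff_X_pow_mul']
      split_ifs with h
      · rw [coeff_eq_zero_of_natDegree_lt (ht.trans_le h), add_zero]
      · rw [zero_add]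
    refine ⟨?_, fun i => ?_⟩
    · rw [hcoeff, if_neg (by omega), hN.1]
    · rw [hcoeff]
      split_ifs
      exacts [ih.2 _, hN.2 _]

theorem cyclotomic_dvd_geom_sum_pow {n t : ℕ} (hn : n ≠ 1) (ht : t ≡ 1 [MOD n]) :
    cyclotomic n ℤ ∣ ∑ j ∈ Finset.range n, (X ^ t) ^ j := by
  have hone : AdjoinRoot.root (cyclotomic n ℤ) ^ n = 1 := by
    have h := (AdjoinRoot.mk_eq_zero (f := cyclotomic n ℤ)).2 (cyclotomic.dvd_X_pow_sub_one n ℤ)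
    simpa [sub_eq_zero] using h
  have hpow : AdjoinRoot.root (cyclotomic n ℤ) ^ t = AdjoinRoot.root (cyclotomic n ℤ) := by
    simpa using pow_eq_pow_of_modEq ht hone
  have hsum : cyclotomic n ℤ ∣ ∑ j ∈ Finset.range n, X ^ j :=
    cyclotomic_dvd_geom_sum_of_dvd ℤ dvd_rfl hn
  rw [← AdjoinRoot.mk_eq_zero] at hsum ⊢
  simpa [hpow] using hsum

theorem exists_isNewman_dvd_of_forall_two_le (l : List ℕ) (hl : ∀ n ∈ l, 2 ≤ n) :
    ∃ N : ℤ[X], IsNewman N ∧ (l.map fun n => cyclotomic n ℤ).prod ∣ N := by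
  induction l with
  | nil => exact ⟨1, ⟨by simp, fun i => by rw [coeff_one]; split_ifs <;> simp⟩, by simp⟩
  | cons n l ih =>
    obtain ⟨N, hN, hdvd⟩ := ih fun k hk => hl k (List.mem_cons_of_mem n hk)
    have hn : 2 ≤ n := hl n List.mem_cons_self
    obtain ⟨m, rfl⟩ : ∃ m, n = m + 1 := ⟨n - 1, by omega⟩
    have ht : N.natDegree < 1 + (m + 1) * N.natDegree := by nlinarith
    refine ⟨_, hN.mul_geom_sum ht m, ?_⟩
    rw [List.map_cons, List.prod_cons, mul_comm]
    exact mul_dvd_mul hdvd (cyclotomic_dvd_geom_sum_pow (by omega) (by simp [Nat.ModEq]))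

theorem cyclotomic_product_has_newman_multiple
    (P : Polynomial ℤ) (hP : IsCyclotomicProduct P) (h1 : P.eval 1 ≠ 0) :
    ∃ N : Polynomial ℤ, IsNewman N ∧ P ∣ N := by
  obtain ⟨l, hl, rfl⟩ := hP
  refine exists_isNewman_dvd_of_forall_two_le l fun n hn => ?_
  have hne : n ≠ 1 := by
    rintro rfl
    refine h1 (eval_eq_zero_of_dvd_of_eval_eq_zero
      (List.dvd_prod (List.mem_map_of_mem hn)) ?_)
    simp
  have := hl n hn
  omega
end

section
/- Let P ∈ ℤ[X] be a nonzero polynomial and let n ≥ 1 be an integer. Then the product Φ_n(X)·P(X) divides some Littlewood polynomial if and only if P divides some Littlewood polynomial, where Φ_n denotes the n-th cyclotomic polynomial. -/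
open Polynomial

theorem IsLittlewood.neg {A : ℤ[X]} (hA : IsLittlewood A) : IsLittlewood (-A) := by
  refine ⟨neg_ne_zero.mpr hA.1, fun i hi => ?_⟩
  rw [natDegree_neg] at hi
  rcases hA.2 i hi with h | h <;> simp [h]

/-- The degree of the concatenation of two coefficient sequences. -/
theorem natDegree_add_X_pow_natDegree_succ_mul (A : ℤ[X]) {B : ℤ[X]} (hB : B ≠ 0) :
    (A + X ^ (A.natDegree + 1) * B).natDegree = A.natDegree + 1 + B.natDegree := by
  have hdeg : (X ^ (A.natDegree + 1) * B).natDegree = A.natDegree + 1 + B.natDegree := by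
    rw [natDegree_X_pow_mul _ hB, add_comm]
  rw [natDegree_add_eq_right_of_natDegree_lt (by omega), hdeg]

/-- Concatenating the coefficient sequences of two Littlewood polynomials gives a Littlewood
polynomial. -/
theorem IsLittlewood.add_X_pow_mul {A B : ℤ[X]} (hA : IsLittlewood A) (hB : IsLittlewood B) :
    IsLittlewood (A + X ^ (A.natDegree + 1) * B) := by
  have hdeg := natDegree_add_X_pow_natDegree_succ_mul A hB.1
  refine ⟨fun h => ?_, fun i hi => ?_⟩
  · rw [h, natDegree_zero] at hdeg
    omega
  · rw [coeff_add, coeff_X_pow_mul']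
    split_ifs with h
    · rw [coeff_eq_zero_of_natDegree_lt (by omega), zero_add]
      exact hB.2 _ (by omega)
    · rw [add_zero]
      exact hA.2 _ (by omega)

/-- Repeating the coefficient sequence of a Littlewood polynomial `k + 1` times gives a
Littlewood multiple. -/
theorem IsLittlewood.exists_dvd_natDegree_add_one_eq {L : ℤ[X]} (hL : IsLittlewood L) (k : ℕ) :
    ∃ Q : ℤ[X], IsLittlewood Q ∧ L ∣ Q ∧ Q.natDegree + 1 = (k + 1) * (L.natDegree + 1) := by
  induction k with
  | zero => exact ⟨L, hL, dvd_rfl, by ring⟩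
  | succ k ih =>
    obtain ⟨Q, hQ, hLQ, hdeg⟩ := ih
    refine ⟨_, hQ.add_X_pow_mul hL, dvd_add hLQ (dvd_mul_left _ _), ?_⟩
    rw [natDegree_add_X_pow_natDegree_succ_mul Q hL.1, hdeg]
    ring

theorem cyclotomic_factor_littlewood_multiple
    (P : Polynomial ℤ) (hP : P ≠ 0) (n : ℕ) (hn : 1 ≤ n) :
    (∃ L : Polynomial ℤ, IsLittlewood L ∧ cyclotomic n ℤ * P ∣ L) ↔
      (∃ L : Polynomial ℤ, IsLittlewood L ∧ P ∣ L) := by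
  constructor
  · rintro ⟨L, hL, h⟩
    exact ⟨L, hL, dvd_of_mul_left_dvd h⟩
  · rintro ⟨L, hL, hPL⟩
    obtain ⟨Q, hQ, hLQ, hdeg⟩ := hL.exists_dvd_natDegree_add_one_eq (n - 1)
    rw [Nat.sub_add_cancel hn] at hdeg
    refine ⟨_, hQ.add_X_pow_mul hQ.neg, ?_⟩
    have hfactor : Q + X ^ (Q.natDegree + 1) * -Q = (X ^ (Q.natDegree + 1) - 1) * -Q := by ring
    rw [hfactor, hdeg, pow_mul]
    exact mul_dvd_mul ((cyclotomic.dvd_X_pow_sub_one n ℤ).trans (sub_one_dvd_pow_sub_one _ _))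
      ((hPL.trans hLQ).trans (dvd_neg.mpr dvd_rfl))
end

section
/- Every Newman polynomial of degree at most 8 divides some Littlewood polynomial. -/
open Polynomial

namespace LittlewoodMultiple

/-- The polynomial whose coefficients are the `k` lowest digits of `n` in base `c`. -/
noncomputable def digitPoly (c : ℕ) : ℕ → ℕ → ℤ[X]
  | 0, _ => 0
  | k + 1, n => C ((n % c : ℕ) : ℤ) + X * digitPoly c k (n / c)

theorem coeff_digitPoly (c k n i : ℕ) :
    (digitPoly c k n).coeff i = if i < k then ((n / c ^ i % c : ℕ) : ℤ) else 0 := by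
  induction k generalizing n i with
  | zero => simp [digitPoly]
  | succ k ih =>
    cases i with
    | zero => rw [digitPoly, coeff_add, coeff_C_zero, mul_coeff_zero]; simp
    | succ i =>
      rw [digitPoly, coeff_add, coeff_C_succ, coeff_X_mul, ih, Nat.div_div_eq_div_mul, pow_succ']
      simp

/-- The polynomial `1 + X + ⋯ + X ^ (k - 1)`. -/
noncomputable def onesPoly (k : ℕ) : ℤ[X] := ∑ i ∈ Finset.range k, X ^ i

theorem coeff_onesPoly (k i : ℕ) : (onesPoly k).coeff i = if i < k then 1 else 0 := by
  simp [onesPoly, coeff_X_pow]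

/-- The polynomial of degree less than `k` whose coefficients `±1` are given by the lowest `k`
binary digits of `n`. -/
noncomputable def signPoly (k n : ℕ) : ℤ[X] := C 2 * digitPoly 2 k n - onesPoly k

theorem coeff_signPoly (k n i : ℕ) :
    (signPoly k n).coeff i = if i < k then 2 * ((n / 2 ^ i % 2 : ℕ) : ℤ) - 1 else 0 := by
  rw [signPoly, coeff_sub, coeff_C_mul, coeff_digitPoly, coeff_onesPoly]
  split_ifs <;> ring

theorem isLittlewood_signPoly {k : ℕ} (hk : 0 < k) (n : ℕ) : IsLittlewood (signPoly k n) := by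
  have hcoeff (i : ℕ) (hi : i < k) :
      (signPoly k n).coeff i = 1 ∨ (signPoly k n).coeff i = -1 := by
    rw [coeff_signPoly, if_pos hi]
    omega
  have hzero : signPoly k n ≠ 0 := by
    intro h
    have := hcoeff 0 hk
    simp [h] at this
  refine ⟨hzero, fun i hi => hcoeff i (hi.trans_lt ?_)⟩
  by_contra! hdeg
  apply leadingCoeff_ne_zero.2 hzero
  rw [leadingCoeff, coeff_signPoly, if_neg hdeg.not_gt]

theorem coeff_zero_eq_zero_of_eval_eq_zero {b : ℤ} {p : ℤ[X]}
    (hcoeff : |p.coeff 0| < b) (heval : p.eval b = 0) : p.coeff 0 = 0 := by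
  refine Int.eq_zero_of_abs_lt_dvd ?_ hcoeff
  simpa [heval, coeff_zero_eq_eval_zero] using sub_dvd_eval_sub b 0 p

theorem eq_zero_of_eval_eq_zero {b : ℤ} {p : ℤ[X]} (hb : b ≠ 0)
    (hcoeff : ∀ i, |p.coeff i| < b) (heval : p.eval b = 0) : p = 0 := by
  suffices h : ∀ i, p.coeff i = 0 by ext i; simp [h i]
  intro i
  induction i generalizing p with
  | zero => exact coeff_zero_eq_zero_of_eval_eq_zero (hcoeff 0) heval
  | succ i ih =>
    rw [← coeff_divX]
    refine ih (fun j => by simpa only [coeff_divX] using hcoeff (j + 1)) ?_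
    have h0 := coeff_zero_eq_zero_of_eval_eq_zero (hcoeff 0) heval
    rw [← divX_mul_X_add p, h0] at heval
    simpa [hb] using heval

theorem abs_coeff_digitPoly_mul_le {Q : ℤ[X]} {B : ℤ} (hQ : ∀ i, |Q.coeff i| ≤ B)
    (k m i : ℕ) : |(digitPoly 2 k m * Q).coeff i| ≤ k * B := by
  induction k generalizing m i with
  | zero => simp [digitPoly]
  | succ k ih =>
    have hB : 0 ≤ B := (abs_nonneg _).trans (hQ 0)
    have hlow : |((m % 2 : ℕ) : ℤ) * Q.coeff i| ≤ B := by
      rcases Nat.mod_two_eq_zero_or_one m with h | h <;> simp [h, hB, hQ i]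
    have hhigh : |(X * (digitPoly 2 k (m / 2) * Q)).coeff i| ≤ k * B := by
      cases i with
      | zero => simpa using by positivity
      | succ i => simpa only [coeff_X_mul] using ih (m / 2) i
    rw [digitPoly, add_mul, mul_assoc, coeff_add, coeff_C_mul]
    rw [Nat.cast_succ]
    linarith [abs_add_le (((m % 2 : ℕ) : ℤ) * Q.coeff i)
      ((X * (digitPoly 2 k (m / 2) * Q)).coeff i)]

/-- The base in which polynomials are packed into natural numbers. -/
def base : ℕ := 65536

/-- The value at `base` of `digitPoly 2 k n`. -/
def packBits : ℕ → ℕ → ℕ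
  | 0, _ => 0
  | k + 1, n => n % 2 + base * packBits k (n / 2)

theorem eval_digitPoly_two (k n : ℕ) : (digitPoly 2 k n).eval (base : ℤ) = packBits k n := by
  induction k generalizing n with
  | zero => simp [digitPoly, packBits]
  | succ k ih => simp [digitPoly, packBits, ih]

/-- The value at `base` of `onesPoly k`. -/
def packOnes (k : ℕ) : ℕ := (base ^ k - 1) / (base - 1)

theorem eval_onesPoly (k : ℕ) : (onesPoly k).eval (base : ℤ) = packOnes k := by
  rw [packOnes, ← Nat.geomSum_eq (by decide)]
  simp [onesPoly, eval_finsetSum]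

/-- Whether `z` has at most `k` digits in base `base`, all of them less than `512`. -/
def digitsLt : ℕ → ℕ → Bool
  | 0, z => z == 0
  | k + 1, z => Nat.blt (z % base) 512 && digitsLt k (z / base)

theorem eval_digitPoly_base {k z : ℕ} (h : digitsLt k z = true) :
    (digitPoly base k z).eval (base : ℤ) = z := by
  induction k generalizing z with
  | zero => simp_all [digitPoly, digitsLt]
  | succ k ih =>
    rw [digitsLt, Bool.and_eq_true] at h
    rw [digitPoly, eval_add, eval_mul, eval_X, eval_C, ih h.2]
    exact_mod_cast Nat.mod_add_div z base

theorem coeff_digitPoly_base_lt {k z : ℕ} (h : digitsLt k z = true) (i : ℕ) :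
    (digitPoly base k z).coeff i < 512 := by
  induction k generalizing z i with
  | zero => simp [digitPoly]
  | succ k ih =>
    rw [digitsLt, Bool.and_eq_true, Nat.blt_eq] at h
    cases i with
    | zero =>
      rw [digitPoly, coeff_add, coeff_C_zero, mul_coeff_zero, coeff_X_zero, zero_mul, add_zero]
      exact_mod_cast h.1
    | succ i =>
      rw [digitPoly, coeff_add, coeff_C_succ, coeff_X_mul, zero_add]
      exact ih h.2 i

/-- Whether `z` packs the coefficients, shifted by `256`, of the quotient of a polynomial
`signPoly k n` by a polynomial with coefficients `0` and `1`, given the packed values `s` of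
`digitPoly 2 k n`, `j` of `onesPoly k` and `p` of the divisor. -/
def isQuotient (k s j p z : ℕ) : Bool :=
  z * p + j == 2 * s + 256 * p * j && digitsLt k z

/-- Computes the only candidate for a packed quotient and tests it with `isQuotient`. -/
def hasQuotient (k s j p : ℕ) : Bool :=
  isQuotient k s j p ((2 * s + 256 * p * j - j) / p)

theorem dvd_of_isQuotient {k n m z : ℕ}
    (h : isQuotient k (packBits k n) (packOnes k) (packBits 9 m) z = true) :
    digitPoly 2 9 m ∣ signPoly k n := by
  rw [isQuotient, Bool.and_eq_true, beq_iff_eq] at h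
  obtain ⟨hval, hdigits⟩ := h
  set Q : ℤ[X] := digitPoly base k z - C 256 * onesPoly k with hQdef
  have hQ (i : ℕ) : |Q.coeff i| ≤ 256 := by
    have hlt := coeff_digitPoly_base_lt hdigits i
    rw [hQdef, coeff_sub, coeff_C_mul, coeff_onesPoly, abs_le]
    rw [coeff_digitPoly] at hlt ⊢
    split_ifs at hlt ⊢ <;> constructor <;> omega
  refine ⟨Q, (sub_eq_zero.1 (eq_zero_of_eval_eq_zero (b := base) (by decide) ?_ ?_)).symm⟩
  · intro i
    have hprod := abs_le.1 (abs_coeff_digitPoly_mul_le hQ 9 m i)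
    rw [coeff_sub, coeff_signPoly, abs_lt]
    norm_num [base] at hprod ⊢
    split_ifs <;> constructor <;> omega
  · have hval' : (z * packBits 9 m + packOnes k : ℤ) =
        2 * packBits k n + 256 * packBits 9 m * packOnes k := by
      exact_mod_cast hval
    simp only [hQdef, signPoly, eval_sub, eval_mul, eval_C, eval_digitPoly_two, eval_onesPoly,
      eval_digitPoly_base hdigits]
    linear_combination hval'

theorem exists_eq_digitPoly {P : ℤ[X]} (hP : IsNewman P) (hdeg : P.natDegree ≤ 8) :
    ∃ m < 512, m % 2 = 1 ∧ P = digitPoly 2 9 m := by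
  set m := Nat.ofBits fun i : Fin 9 => decide (P.coeff i = 1)
  have hm : P = digitPoly 2 9 m := by
    ext i
    rw [coeff_digitPoly]
    split_ifs with hi
    · have hbit : m.testBit i = decide (P.coeff i = 1) := Nat.testBit_ofBits_lt _ i hi
      rw [Nat.testBit_eq_decide_div_mod_eq, decide_eq_decide] at hbit
      rcases hP.2 i with h | h <;> rw [h] at hbit ⊢ <;> omega
    · exact coeff_eq_zero_of_natDegree_lt (by omega)
  refine ⟨m, Nat.ofBits_lt_two_pow _, ?_, hm⟩
  have h0 := hP.1
  rw [hm, coeff_digitPoly] at h0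
  norm_num at h0
  omega

/-- For odd `m`, entry `m / 2` encodes by its binary digits, through `signPoly`, a Littlewood
multiple of the Newman polynomial `digitPoly 2 9 m`. -/
def multiples : List ℕ :=
  [1, 3, 10, 7, 36, 80, 96, 15, 136, 18464, 42, 10296, 16746, 2142, 8786, 31, 528, 1114883,
   1109921848, 160305159, 1109542921, 557584420, 2070, 1214448144, 1190553, 153, 810584085,
   1252525511, 177933621, 1879462491, 1117815330, 63, 2080, 4756786782262190700, 8709,
   2667540295081553976, 292, 142722915, 2458502176322883962, 19504, 10257, 2819145023891, 170,
   1219487, 2883509132026989798, 5765470856092867059, 16616, 649143094170153420,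
   4852256158814347605, 524634, 3461929310245, 4637167757675755701, 155211690, 3171,
   5284315151535772960, 2383532561589090360, 2312086975070645066, 4776549873568813606, 1132874,
   8388667, 17170, 2382721741783376676, 585849293746228050, 127, 8256,
   86404688653201681780465361318937641996, 4991617128575214398690230893, 630627625726445475,
   85758573645118131733640834155163201599, 638605915, 11650555968877301355887052127761637509,
   98400526775661049517791107750908954608, 85746404989033415836589426944827757681,
   10725829651866047632071377147456963040, 44317629232532826419004951728521048127, 2545407638135,
   8388684, 18264223996, 95766846867941695162753095168851036037, 2613551578143,
   5031781553147815527198540998, 53218781752231326168515939646648886019, 524370,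
   108999486718313603557498027750359046424, 42894295949581303501028482580802145494,
   85826218442073531570817548393402944483, 20395238936582516117262162955173,
   10281843960132226067333545, 13376091311727602265488221818656495829,
   6290440614618139615129997887, 20451727845046324595282781785706,
   54851444643492224817892861003954165623, 106678827114576286792400598306843328786,
   45040695254729827, 2331, 85218413135825222442157499580399019583,
   88563223323432303609368597100489878893, 2145, 49598627714546971697969875651938022426,
   22986731365707575756573128011295, 11469790916578450810420836774968954898,
   133680876233601884305775226386912643664, 7492813774721296894180730938, 8709, 806711961,
   127654012714006282401449830635914159648, 130618811745289601940555477962891269205,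
   16035479867100932520696767387906257055, 19504048877, 131181, 54062231985634591,
   5738327333008547246883567648, 613080404301284550, 20322210249425207465608198334761,
   149183306978723996529013523874720602469, 536871027, 4093243501060,
   18880049263581100601199678897572764060, 74860400612271779650922294981303619807,
   91083613364856943827459226218978031503, 99833115098790448837756473637687403146, 10257,
   10979803291799960205752010, 88654047632325862620027527072534286527, 2222312331501,
   5033071157299312958153830963, 85749050635107903801575151920669265922, 255, 32896,
   4647782989328084480, 545283072,
   16623905406243865345843483273850261496338876971448040587771507969465520164871,
   108610131169501564872464372661724023346376367001597160336369129508,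
   10432860586901398880523984, 52894574055572418981533725566262113155025487958120813293,
   115210430168438153850214905430492337080944186707317072923071729695, 2184,
   15044538718970313446801787457225671942452412638946065833442326100917933750979, 142629525,
   19592, 15387038339732743854686422120284799196268566002650114729118798577729991181129,
   1504845419860004,
   33476613532715166457719999846268341692091585013329705488141411189614641791981,
   11184853443911547531502623,
   105743073469461145540302177695413980055736590932308480918567716897,
   672692759618691487837347377653222023,
   823792778916203885174272578952601916959525662211365765340492728, 5261435924263444711,
   576460752387310395,
   32571273769878028330797997965056822208934799033617703846879956568461162084252,
   31697274347377109157008846127682913992198164066923248537357329815552032556158,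
   15844213155480429627628270292102609482257095114874546039493543416075141016245,
   16314207723458741158752383800293828365750510660807284190461392396243158783669,
   118920265462210145754658164041141389768488982176886897907004604620, 4637167757675756216,
   4102564884037248539240991097747241999502896059938042514442858326359900044408, 73830,
   2337820671564, 12648542438486885122569226545727137898, 22401726286945707558242055, 537012633,
   14823965143737633346533085857779275703914541126847596970743310274333761578063, 8397545,
   133704908257293316906012289212257232693895911495431428344707020927,
   853624832876680814098991742499126620142619689681314848774609188, 1082172,
   37217207682902610850178997987143037917807945977633203976338440682253811338655,
   3902748925488418438365846041062938712385261382785154297365200192582875881600, 134768217,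
   139138441270968551594554934914754960482558231224638878568408521331, 682,
   57171512879380228908417842592777416566540539426039156787, 4776549873569269811,
   11680072508727880649850121697179732035,
   14936956171087357584959321971338040696370945952577048365003021947246605386162,
   31712330663620472903114504212663429526356803567563662024947118913361997218944,
   61503766882810868132776155844675521523145106496258589894,
   36540263847056954619896736179281831091518010705793295146725044161175132848591,
   36209870391143936187353907253349078405519951885996959610466480144208236069551,
   45338813324533063,
   29351640040275852236051336902124336720153272797613416284967463671109527299897,
   737946751053533849091, 34359738550, 671113456,
   40286016342212558471604348152525706563431064900550581968343427562623534874739,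
   802363184651935823,
   16682634698451206819584739271705063973923560399675952972017239937649981107530,
   24259463454819267098331128, 13999741697691090323297151564093115673,
   22004015555590024493473996, 1050671,
   16403432413989704619336869102060213276827218628947878070429928256133465640063,
   4779491873648189586, 134219082,
   21966165345526691452714831313017848915646440159799038108594573111009381020970,
   32684317342190394791914537691216816209227075597129933272318678513351660994624,
   690582011417888015459389141660633677, 29102746853371426870755408,
   32709976420056299547948962523798721629923817243362871149769597532491262229893,
   50579462689380439628111905356702933173646771159120086661,
   17471044173276069947874167488496417883105226812482840592679984129917472347434, 545259558,
   164583634365085826661521024938760368446829926127264853104952641823,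
   16710732234571026826495499268522227391,
   105441059852560994692992111222949256629752391266121312400120545453,
   15378645776048778499726024531435946991739218472702684756145076291775298147154,
   696515508505252786, 1180841514431786, 14507112971642120788526634, 29243404127108030137455820,
   1577141, 16848753286866587481339107729484487699358899201815278281213788451263336744711,
   43649311532330817624560367113048109216538636934667863981663427079630152606171, 12669923,
   885806440198976091807, 162905374939038824998423568774327087808107366676189807894796853135,
   1696727203108650,
   16293974076256786133411877909169104405053334891450605826413871131297003569134,
   16122125226017942304645112096317768885, 3308572764024, 2542956194457, 24579,
   29092181796110860431399978,
   4079761919695905258492341670729470407054934115674103974792295642558982381632,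
   15113071979150846662371554436456460419754575180031669660130905757868467906642,
   30916795627897159561805645709232658451697324669836028504104089173679714493683,
   107431511593230215788915716431953669438511429656682471061352820570, 2275, 8082045434813091858,
   25330481082139318693041545339187640660667544236816046610535572685868223566372,
   63816743257557125,
   31776976107712664502637557079538434019207258680020512520990277872722959978591, 17546,
   18721597771550085524559625170701931123,
   52895074404270295901673244594417404469001161357989122133, 71423,
   6332878983032780173565952009036547725445344661747419133981817927337767150011, 3851349939964,
   21188394247384437197483282, 884770075812013674204671614713067087027672297460308005750556144,
   105495342869511249870799774942398568392370249246865891974640339082,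
   50194566379860332294296156383750431221752878821755875724,
   3807263233501766871989791085306520612904951961313631064391662244186508821165,
   29430438366051671536846886157387613065015030315074192277843036793542163178303,
   14990085185689939722625212279715660478058815208230218182620805178727113982829,
   109703620441916642751055817525349478837374299603919368855019210788, 556426989, 549755895810,
   9717968676970739184259225, 1135539459788998,
   34955347224631799883060903558781583175422306057653638834683604138818420838647,
   836042125272343790836375431120312504822843200519168824473308296, 19449529890264364478141258,
   3652516064971265234739653277008468068900876385562453271458754354985296012329,
   14545295991206116736365849013444452737553064087981543890710495085147821615253, 511]

/-- Whether `signPoly`, applied to all binary digits of `n`, is a multiple of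
`digitPoly 2 9 m`. -/
def encodesMultiple (m n : ℕ) : Bool :=
  hasQuotient (n.log2 + 1) (packBits (n.log2 + 1) n) (packOnes (n.log2 + 1)) (packBits 9 m)

theorem encodesMultiple_multiples :
    ∀ m < 512, m % 2 = 1 → encodesMultiple m (multiples.getD (m / 2) 0) = true := by
  decide +kernel

end LittlewoodMultiple

open LittlewoodMultiple in
theorem newman_deg_le_8_has_littlewood_multiple
    (P : Polynomial ℤ) (hP : IsNewman P) (hdeg : P.natDegree ≤ 8) :
    ∃ L : Polynomial ℤ, IsLittlewood L ∧ P ∣ L := by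
  obtain ⟨m, hm, hodd, rfl⟩ := exists_eq_digitPoly hP hdeg
  exact ⟨_, isLittlewood_signPoly (Nat.succ_pos _) _,
    dvd_of_isQuotient (encodesMultiple_multiples m hm hodd)⟩
end

section
/- Every Borwein trinomial X^a + ε₁·X^b + ε₂, where a > b ≥ 1 are integers and ε₁, ε₂ ∈ {−1, 1}, divides some Littlewood polynomial. -/
open Polynomial

/-- A sign satisfying `|greedySign s - s| ≤ 1` whenever `|s| ≤ 2`. -/
def greedySign (s : ℤ) : ℤ := if 0 < s then 1 else -1

theorem greedySign_eq (s : ℤ) : greedySign s = 1 ∨ greedySign s = -1 := by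
  unfold greedySign
  split_ifs <;> simp

/-- The coefficients, shifted by `a`, of the power series `Q` for which
`(X ^ a + ε₁ X ^ b + ε₂) Q` has greedily chosen coefficients `±1`. -/
def greedyQuotient (a b : ℕ) (hb : 1 ≤ b) (hba : b < a) (ε₁ ε₂ : ℤ) (n : ℕ) : ℤ :=
  if n < a then 0
  else
    let s := greedyQuotient a b hb hba ε₁ ε₂ (n - a) +
      ε₁ * greedyQuotient a b hb hba ε₁ ε₂ (n - b)
    ε₂ * (greedySign s - s)
termination_by n
decreasing_by all_goals omega

/-- A sequence over a finite type in which every window of length `a` determines its predecessor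
returns to its initial window. -/
theorem exists_window_return {α : Type*} [Finite α] (a : ℕ) (p : ℕ → α)
    (hp : ∀ m n, (∀ i < a, p (m + 1 + i) = p (n + 1 + i)) → p m = p n) :
    ∃ T, 0 < T ∧ ∀ i < a, p (T + i) = p i := by
  have descend : ∀ m T, (∀ i < a, p (m + T + i) = p (m + i)) → ∀ i < a, p (T + i) = p i := by
    intro m
    induction m with
    | zero => simp
    | succ m ih =>
      intro T h
      refine ih T fun i hi => ?_
      cases i with
      | zero =>
        refine hp _ _ fun i hi => ?_
        simpa only [add_right_comm m T 1] using h i hi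
      | succ i =>
        have := h i (by omega)
        rwa [show m + 1 + T + i = m + T + (i + 1) by ring,
          show m + 1 + i = m + (i + 1) by ring] at this
  obtain ⟨m, n, hne, heq⟩ :=
    Finite.exists_ne_map_eq_of_infinite fun (m : ℕ) (i : Fin a) => p (m + i)
  wlog hmn : m < n generalizing m n
  · exact this n m hne.symm heq.symm (by omega)
  refine ⟨n - m, by omega, descend m (n - m) fun i hi => ?_⟩
  rw [show m + (n - m) + i = n + i by omega]
  exact (congrFun heq ⟨i, hi⟩).symm

/-- Shifting a sequence whose windows of length `a` at `0` and at `T` vanish. -/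
theorem sum_shift_eq_X_pow_mul {R : Type*} [CommRing R] {a T : ℕ} {r : ℕ → R}
    (h0 : ∀ i < a, r i = 0) (hT : ∀ i < a, r (T + i) = 0) (k j : ℕ) (hkj : k + j ≤ a) :
    ∑ n ∈ Finset.range T, C (r (n + k)) * X ^ n =
      X ^ j * ∑ n ∈ Finset.range T, C (r (n + (k + j))) * X ^ n := by
  induction j with
  | zero => simp
  | succ j ih =>
    have hstep : ∑ n ∈ Finset.range T, C (r (n + (k + j))) * X ^ n =
        X * ∑ n ∈ Finset.range T, C (r (n + (k + (j + 1)))) * X ^ n := by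
      have h := Finset.sum_range_succ (fun n => C (r (n + (k + j))) * (X : R[X]) ^ n) T
      rw [Finset.sum_range_succ', hT _ (by omega), zero_add, h0 _ (by omega)] at h
      simp only [map_zero, zero_mul, add_zero] at h
      rw [← h, Finset.mul_sum]
      refine Finset.sum_congr rfl fun n _ => ?_
      rw [show n + 1 + (k + j) = n + (k + (j + 1)) by ring]
      ring
    rw [ih (by omega), hstep, pow_succ, mul_assoc]

/-- A nonempty sum of monomials of consecutive degrees with signs as coefficients. -/
theorem isLittlewood_sum_range {T : ℕ} (hT : 0 < T) (c : ℕ → ℤ) (hc : ∀ n, c n = 1 ∨ c n = -1) :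
    IsLittlewood (∑ n ∈ Finset.range T, C (c n) * X ^ n) := by
  have hcoeff : ∀ i, (∑ n ∈ Finset.range T, C (c n) * X ^ n : ℤ[X]).coeff i =
      if i < T then c i else 0 := by
    intro i
    simp [coeff_X_pow]
  have hne : (∑ n ∈ Finset.range T, C (c n) * X ^ n : ℤ[X]) ≠ 0 := by
    intro h
    have h0 := hcoeff 0
    rw [h, coeff_zero, if_pos hT] at h0
    have := hc 0
    omega
  refine ⟨hne, fun i hi => ?_⟩
  have hdeg : i < T := by
    by_contra hlt
    refine leadingCoeff_ne_zero.mpr hne ?_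
    rw [leadingCoeff, hcoeff, if_neg (by omega)]
  rw [hcoeff, if_pos hdeg]
  exact hc i

theorem borwein_trinomial_has_littlewood_multiple
    (a b : ℕ) (hb : 1 ≤ b) (hba : b < a)
    (ε₁ ε₂ : ℤ) (h₁ : ε₁ = 1 ∨ ε₁ = -1) (h₂ : ε₂ = 1 ∨ ε₂ = -1) :
    ∃ L : Polynomial ℤ, IsLittlewood L ∧
      (X ^ a + C ε₁ * X ^ b + C ε₂ : Polynomial ℤ) ∣ L := by
  obtain ⟨d, rfl⟩ := Nat.exists_eq_add_of_lt hba
  obtain ⟨r, hr⟩ : ∃ r, r = greedyQuotient _ b hb hba ε₁ ε₂ := ⟨_, rfl⟩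
  have hinit : ∀ i < b + d + 1, r i = 0 := by
    intro i hi
    rw [hr, greedyQuotient, if_pos hi]
  have hrec : ∀ n, r (n + (b + d + 1)) =
      ε₂ * (greedySign (r n + ε₁ * r (n + (d + 1))) - (r n + ε₁ * r (n + (d + 1)))) := by
    intro n
    rw [hr, greedyQuotient, if_neg (by omega), Nat.add_sub_cancel,
      show n + (b + d + 1) - b = n + (d + 1) by omega]
  have hbound : ∀ n, -1 ≤ r n ∧ r n ≤ 1 := by
    intro n
    induction n using Nat.strong_induction_on with
    | _ n ih =>
      rcases lt_or_ge n (b + d + 1) with hn | hn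
      · simp [hinit n hn]
      · obtain ⟨m, rfl⟩ := Nat.exists_eq_add_of_le' hn
        have hx := ih m (by omega)
        have hy := ih (m + (d + 1)) (by omega)
        rw [hrec, greedySign]
        rcases h₁ with rfl | rfl <;> rcases h₂ with rfl | rfl <;> split_ifs <;> omega
  have hparity : ∀ n, (r n : ZMod 2) = r (n + (b + d + 1)) + r (n + (d + 1)) + 1 := by
    intro n
    have hmod : r n % 2 = (r (n + (b + d + 1)) + r (n + (d + 1)) + 1) % 2 := by
      have hs := greedySign_eq (r n + ε₁ * r (n + (d + 1)))
      rw [hrec]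
      rcases h₁ with rfl | rfl <;> rcases h₂ with rfl | rfl <;> omega
    exact_mod_cast (ZMod.intCast_eq_intCast_iff _ _ 2).mpr hmod
  obtain ⟨T, hTpos, hT⟩ := exists_window_return (b + d + 1) (fun n => (r n : ZMod 2)) (by
    intro m n h
    have hlast := h (b + d) (by omega)
    have hmid := h d (by omega)
    rw [show m + 1 + (b + d) = m + (b + d + 1) by ring,
      show n + 1 + (b + d) = n + (b + d + 1) by ring] at hlast
    rw [show m + 1 + d = m + (d + 1) by ring, show n + 1 + d = n + (d + 1) by ring] at hmid
    simp only [hparity m, hparity n, hlast, hmid])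
  have hend : ∀ i < b + d + 1, r (T + i) = 0 := by
    intro i hi
    have h := hT i hi
    simp only [hinit i hi, Int.cast_zero] at h
    have hdvd := (ZMod.intCast_zmod_eq_zero_iff_dvd _ 2).mp h
    have := hbound (T + i)
    omega
  refine ⟨_, isLittlewood_sum_range hTpos (fun n => greedySign (r n + ε₁ * r (n + (d + 1))))
    (fun n => greedySign_eq _), ∑ n ∈ Finset.range T, C (r (n + (b + d + 1))) * X ^ n, ?_⟩
  have hzero := sum_shift_eq_X_pow_mul hinit hend 0 (b + d + 1) (by omega)
  have hmid := sum_shift_eq_X_pow_mul hinit hend (d + 1) b (by omega)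
  rw [zero_add] at hzero
  rw [show d + 1 + b = b + d + 1 by ring] at hmid
  rw [add_mul, add_mul, mul_assoc, ← hzero, ← hmid, Finset.mul_sum, Finset.mul_sum,
    ← Finset.sum_add_distrib, ← Finset.sum_add_distrib]
  refine Finset.sum_congr rfl fun n _ => ?_
  have hsign : greedySign (r n + ε₁ * r (n + (d + 1))) =
      r n + ε₁ * r (n + (d + 1)) + ε₂ * r (n + (b + d + 1)) := by
    rw [hrec]
    rcases h₂ with rfl | rfl <;> ring
  simp only [hsign, map_add, map_mul, add_zero]
  ring
end

section
/- Each of the nine polynomials P₁ = X^6+X^5−X^4−X^3−X^2+X+1, P₂ = X^7+X^6−X^5+X^4+X^3−X^2+X+1, P₃ = X^8+X^7−X^6−X^5+X^4−X^3−X^2+X+1, P₄ = X^9+X^8+X^7−X^6−X^5−X^4−X^3+X^2+X+1, P₅ = X^10−X^9+X^8+X^7−X^6+X^5−X^4+X^3+X^2−X+1, P₆ = X^10+X^9+X^8−X^7−X^6−X^5−X^4−X^3+X^2+X+1, P₇ = X^12+X^11−X^10−X^9−X^8+X^7+X^6+X^5−X^4−X^3−X^2+X+1, P₈ = X^12−X^11+X^10+X^9−X^8+X^7+X^6+X^5−X^4+X^3+X^2−X+1,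 P₉ = X^12+X^11+X^10−X^9−X^8−X^7+X^6−X^5−X^4−X^3+X^2+X+1 divides some Newman polynomial and is not a product of cyclotomic polynomials. -/
open Polynomial

set_option maxHeartbeats 1000000

/-- A sum of distinct powers of `X`, one of them `X ^ 0`, is a Newman polynomial. -/
theorem isNewman_sum_X_pow (s : Finset ℕ) (hs : 0 ∈ s) :
    IsNewman (∑ i ∈ s, (X : ℤ[X]) ^ i) := by
  have hcoeff (i : ℕ) : (∑ j ∈ s, (X : ℤ[X]) ^ j).coeff i = if i ∈ s then 1 else 0 := by
    simp [coeff_X_pow]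
  refine ⟨by rw [hcoeff, if_pos hs], fun i => ?_⟩
  rw [hcoeff]
  split_ifs <;> simp

/-- If a polynomial of degree less than `q - 1` has, modulo a prime `p`, a root of prime
multiplicative order `q`, then it is not a product of cyclotomic polynomials. -/
theorem not_isCyclotomicProduct_of_root_of_prime_order {P : ℤ[X]} (p q : ℕ) (hp : p.Prime)
    (hq : q.Prime) (a : ZMod p) (ha : a ≠ 1) (haq : a ^ q = 1)
    (hroot : P.eval₂ (Int.castRingHom (ZMod p)) a = 0) (hdeg : P.natDegree + 1 < q) :
    ¬ IsCyclotomicProduct P := by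
  rintro ⟨l, hl, rfl⟩
  have : Fact p.Prime := ⟨hp⟩
  have : Fact q.Prime := ⟨hq⟩
  have horder : orderOf a = q := orderOf_eq_prime haq ha
  rw [← coe_eval₂RingHom, map_list_prod, List.prod_eq_zero_iff] at hroot
  simp only [List.map_map, List.mem_map, Function.comp_apply, coe_eval₂RingHom] at hroot
  obtain ⟨n, hn, hn0⟩ := hroot
  have han : a ^ n = 1 := by
    have h := eval₂_eq_zero_of_dvd_of_eval₂_eq_zero (Int.castRingHom (ZMod p)) a
      (cyclotomic.dvd_X_pow_sub_one n ℤ) hn0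
    simpa [sub_eq_zero] using h
  have hqn : q ∣ n := horder ▸ orderOf_dvd_of_pow_eq_one han
  have hne : (l.map fun n => cyclotomic n ℤ).prod ≠ 0 := by
    rw [Ne, List.prod_eq_zero_iff]
    simp [cyclotomic_ne_zero]
  have hle : (cyclotomic n ℤ).natDegree ≤ (l.map fun n => cyclotomic n ℤ).prod.natDegree :=
    natDegree_le_of_dvd (List.dvd_prod (List.mem_map_of_mem hn)) hne
  rw [natDegree_cyclotomic] at hle
  have htot : q.totient ≤ n.totient :=
    Nat.le_of_dvd (Nat.totient_pos.2 (hl n hn)) (Nat.totient_dvd_of_dvd hqn)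
  rw [Nat.totient_prime hq] at htot
  omega

theorem nine_littlewood_polynomials_with_newman_multiples
    (P : Polynomial ℤ)
    (hP : P ∈ ([X ^ 6 + X ^ 5 - X ^ 4 - X ^ 3 - X ^ 2 + X + 1,
        X ^ 7 + X ^ 6 - X ^ 5 + X ^ 4 + X ^ 3 - X ^ 2 + X + 1,
        X ^ 8 + X ^ 7 - X ^ 6 - X ^ 5 + X ^ 4 - X ^ 3 - X ^ 2 + X + 1,
        X ^ 9 + X ^ 8 + X ^ 7 - X ^ 6 - X ^ 5 - X ^ 4 - X ^ 3 + X ^ 2 + X + 1,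
        X ^ 10 - X ^ 9 + X ^ 8 + X ^ 7 - X ^ 6 + X ^ 5 - X ^ 4 + X ^ 3 + X ^ 2 - X + 1,
        X ^ 10 + X ^ 9 + X ^ 8 - X ^ 7 - X ^ 6 - X ^ 5 - X ^ 4 - X ^ 3 + X ^ 2 + X + 1,
        X ^ 12 + X ^ 11 - X ^ 10 - X ^ 9 - X ^ 8 + X ^ 7 + X ^ 6 + X ^ 5 - X ^ 4 - X ^ 3 - X ^ 2 + X + 1,
        X ^ 12 - X ^ 11 + X ^ 10 + X ^ 9 - X ^ 8 + X ^ 7 + X ^ 6 + X ^ 5 - X ^ 4 + X ^ 3 + X ^ 2 - X + 1,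
        X ^ 12 + X ^ 11 + X ^ 10 - X ^ 9 - X ^ 8 - X ^ 7 + X ^ 6 - X ^ 5 - X ^ 4 - X ^ 3 + X ^ 2 + X + 1]
        : List (Polynomial ℤ))) :
    (∃ N : Polynomial ℤ, IsNewman N ∧ P ∣ N) ∧ ¬ IsCyclotomicProduct P := by
  simp only [List.mem_cons, List.not_mem_nil, or_false] at hP
  rcases hP with rfl | rfl | rfl | rfl | rfl | rfl | rfl | rfl | rfl
  · refine ⟨⟨_, isNewman_sum_X_pow
      {0, 1, 3, 5, 6, 7, 11, 12, 13, 15, 17, 18} (by decide), ?_⟩, ?_⟩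
    · refine ⟨X ^ 12 + X ^ 10 + X ^ 9 + X ^ 8 + X ^ 7 + 2 * X ^ 6 + X ^ 5 + X ^ 4 + X ^ 3 + X ^ 2 + 1, ?_⟩
      simp only [Finset.sum_insert, Finset.sum_singleton, Finset.mem_insert, Finset.mem_singleton,
        OfNat.zero_ne_ofNat, zero_ne_one, OfNat.one_ne_ofNat, Nat.reduceEqDiff, not_false_eq_true, or_self]
      ring
    · refine not_isCyclotomicProduct_of_root_of_prime_order 47 23 (by norm_num)
        (by norm_num) 9 (by decide) (by decide) ?_ ?_
      · simp only [eval₂_add, eval₂_sub, eval₂_pow, eval₂_X, eval₂_one]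
        decide
      · exact (Nat.add_le_add_right (by compute_degree) 1).trans_lt (by norm_num : 6 + 1 < 23)
  · refine ⟨⟨_, isNewman_sum_X_pow
      {0, 1, 3, 5, 7, 8, 11, 12, 14, 16, 18, 19} (by decide), ?_⟩, ?_⟩
    · refine ⟨X ^ 12 + X ^ 10 - X ^ 9 + X ^ 8 - X ^ 7 + X ^ 6 - X ^ 5 + X ^ 4 - X ^ 3 + X ^ 2 + 1, ?_⟩
      simp only [Finset.sum_insert, Finset.sum_singleton, Finset.mem_insert, Finset.mem_singleton,
        OfNat.zero_ne_ofNat, zero_ne_one, OfNat.one_ne_ofNat, Nat.reduceEqDiff, not_false_eq_true, or_self]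
      ring
    · refine not_isCyclotomicProduct_of_root_of_prime_order 59 29 (by norm_num)
        (by norm_num) 4 (by decide) (by decide) ?_ ?_
      · simp only [eval₂_add, eval₂_sub, eval₂_pow, eval₂_X, eval₂_one]
        decide
      · exact (Nat.add_le_add_right (by compute_degree) 1).trans_lt (by norm_num : 7 + 1 < 29)
  · refine ⟨⟨_, isNewman_sum_X_pow
      {0, 1, 4, 6, 13, 15, 18, 19} (by decide), ?_⟩, ?_⟩
    · refine ⟨X ^ 11 + X ^ 9 + X ^ 7 + X ^ 6 + X ^ 5 + X ^ 4 + X ^ 2 + 1, ?_⟩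
      simp only [Finset.sum_insert, Finset.sum_singleton, Finset.mem_insert, Finset.mem_singleton,
        OfNat.zero_ne_ofNat, zero_ne_one, OfNat.one_ne_ofNat, Nat.reduceEqDiff, not_false_eq_true, or_self]
      ring
    · refine not_isCyclotomicProduct_of_root_of_prime_order 23 11 (by norm_num)
        (by norm_num) 4 (by decide) (by decide) ?_ ?_
      · simp only [eval₂_add, eval₂_sub, eval₂_pow, eval₂_X, eval₂_one]
        decide
      · exact (Nat.add_le_add_right (by compute_degree) 1).trans_lt (by norm_num : 8 + 1 < 11)
  · refine ⟨⟨_, isNewman_sum_X_pow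
      {0, 1, 2, 4, 5, 8, 10, 11, 13, 16, 17, 19, 20, 21} (by decide), ?_⟩, ?_⟩
    · refine ⟨X ^ 12 + X ^ 9 + X ^ 8 + X ^ 6 + X ^ 4 + X ^ 3 + 1, ?_⟩
      simp only [Finset.sum_insert, Finset.sum_singleton, Finset.mem_insert, Finset.mem_singleton,
        OfNat.zero_ne_ofNat, zero_ne_one, OfNat.one_ne_ofNat, Nat.reduceEqDiff, not_false_eq_true, or_self]
      ring
    · refine not_isCyclotomicProduct_of_root_of_prime_order 53 13 (by norm_num)
        (by norm_num) 28 (by decide) (by decide) ?_ ?_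
      · simp only [eval₂_add, eval₂_sub, eval₂_pow, eval₂_X, eval₂_one]
        decide
      · exact (Nat.add_le_add_right (by compute_degree) 1).trans_lt (by norm_num : 9 + 1 < 13)
  · refine ⟨⟨_, isNewman_sum_X_pow
      {0, 2, 3, 4, 9, 10, 14, 15, 20, 21, 22, 24} (by decide), ?_⟩, ?_⟩
    · refine ⟨X ^ 14 + X ^ 13 + X ^ 12 - X ^ 9 - X ^ 5 + X ^ 2 + X + 1, ?_⟩
      simp only [Finset.sum_insert, Finset.sum_singleton, Finset.mem_insert, Finset.mem_singleton,
        OfNat.zero_ne_ofNat, Nat.reduceEqDiff, not_false_eq_true, or_self]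
      ring
    · refine not_isCyclotomicProduct_of_root_of_prime_order 149 37 (by norm_num)
        (by norm_num) 85 (by decide) (by decide) ?_ ?_
      · simp only [eval₂_add, eval₂_sub, eval₂_pow, eval₂_X, eval₂_one]
        decide
      · exact (Nat.add_le_add_right (by compute_degree) 1).trans_lt (by norm_num : 10 + 1 < 37)
  · refine ⟨⟨_, isNewman_sum_X_pow
      {0, 1, 2, 5, 8, 10, 11, 13, 14, 21, 22, 24, 25, 27, 30, 33, 34, 35} (by decide), ?_⟩, ?_⟩
    · refine ⟨X ^ 25 + X ^ 22 + X ^ 20 + X ^ 19 + X ^ 17 + X ^ 16 + X ^ 15 + X ^ 14 + X ^ 13 + X ^ 12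
        + X ^ 11 + X ^ 10 + X ^ 9 + X ^ 8 + X ^ 6 + X ^ 5 + X ^ 3 + 1, ?_⟩
      simp only [Finset.sum_insert, Finset.sum_singleton, Finset.mem_insert, Finset.mem_singleton,
        OfNat.zero_ne_ofNat, zero_ne_one, OfNat.one_ne_ofNat, Nat.reduceEqDiff, not_false_eq_true, or_self]
      ring
    · refine not_isCyclotomicProduct_of_root_of_prime_order 47 23 (by norm_num)
        (by norm_num) 2 (by decide) (by decide) ?_ ?_
      · simp only [eval₂_add, eval₂_sub, eval₂_pow, eval₂_X, eval₂_one]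
        decide
      · exact (Nat.add_le_add_right (by compute_degree) 1).trans_lt (by norm_num : 10 + 1 < 23)
  · refine ⟨⟨_, isNewman_sum_X_pow
      {0, 1, 3, 5, 7, 9, 11, 16, 18, 20, 22, 24, 26, 27} (by decide), ?_⟩, ?_⟩
    · refine ⟨X ^ 15 + X ^ 13 + X ^ 12 + X ^ 11 + X ^ 10 + X ^ 9 + X ^ 8 + X ^ 7 + X ^ 6 + X ^ 5 + X ^ 4
        + X ^ 3 + X ^ 2 + 1, ?_⟩
      simp only [Finset.sum_insert, Finset.sum_singleton, Finset.mem_insert, Finset.mem_singleton,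
        OfNat.zero_ne_ofNat, zero_ne_one, OfNat.one_ne_ofNat, Nat.reduceEqDiff, not_false_eq_true, or_self]
      ring
    · refine not_isCyclotomicProduct_of_root_of_prime_order 47 23 (by norm_num)
        (by norm_num) 4 (by decide) (by decide) ?_ ?_
      · simp only [eval₂_add, eval₂_sub, eval₂_pow, eval₂_X, eval₂_one]
        decide
      · exact (Nat.add_le_add_right (by compute_degree) 1).trans_lt (by norm_num : 12 + 1 < 23)
  · refine ⟨⟨_, isNewman_sum_X_pow
      {0, 2, 3, 5, 7, 8, 12, 15, 16, 17, 19, 25, 26, 28, 29, 33, 34, 36, 37, 43, 45, 46, 47, 50,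
       54, 55, 57, 59, 60, 62} (by decide), ?_⟩, ?_⟩
    · refine ⟨X ^ 50 + X ^ 49 + X ^ 48 - X ^ 46 - X ^ 45 - X ^ 44 - X ^ 43 + X ^ 41 + 2 * X ^ 40
        + 2 * X ^ 39 + X ^ 38 - X ^ 36 - 2 * X ^ 35 - 2 * X ^ 34 - X ^ 33 + 2 * X ^ 31
        + 2 * X ^ 30 + 2 * X ^ 29 + X ^ 28 - 2 * X ^ 26 - 2 * X ^ 25 - 2 * X ^ 24 + X ^ 22
        + 2 * X ^ 21 + 2 * X ^ 20 + 2 * X ^ 19 - X ^ 17 - 2 * X ^ 16 - 2 * X ^ 15 - X ^ 14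
        + X ^ 12 + 2 * X ^ 11 + 2 * X ^ 10 + X ^ 9 - X ^ 7 - X ^ 6 - X ^ 5 - X ^ 4 + X ^ 2 + X + 1, ?_⟩
      simp only [Finset.sum_insert, Finset.sum_singleton, Finset.mem_insert, Finset.mem_singleton,
        OfNat.zero_ne_ofNat, Nat.reduceEqDiff, not_false_eq_true, or_self]
      ring
    · refine not_isCyclotomicProduct_of_root_of_prime_order 107 53 (by norm_num)
        (by norm_num) 56 (by decide) (by decide) ?_ ?_
      · simp only [eval₂_add, eval₂_sub, eval₂_pow, eval₂_X, eval₂_one]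
        decide
      · exact (Nat.add_le_add_right (by compute_degree) 1).trans_lt (by norm_num : 12 + 1 < 53)
  · refine ⟨⟨_, isNewman_sum_X_pow
      {0, 1, 2, 6, 9, 12, 13, 15, 16, 25, 26, 28, 29, 32, 35, 39, 40, 41} (by decide), ?_⟩, ?_⟩
    · refine ⟨X ^ 29 + X ^ 26 + X ^ 23 + X ^ 22 + X ^ 20 + X ^ 19 + X ^ 17 + X ^ 16 + X ^ 15 + X ^ 14
        + X ^ 13 + X ^ 12 + X ^ 10 + X ^ 9 + X ^ 7 + X ^ 6 + X ^ 3 + 1, ?_⟩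
      simp only [Finset.sum_insert, Finset.sum_singleton, Finset.mem_insert, Finset.mem_singleton,
        OfNat.zero_ne_ofNat, zero_ne_one, OfNat.one_ne_ofNat, Nat.reduceEqDiff, not_false_eq_true, or_self]
      ring
    · refine not_isCyclotomicProduct_of_root_of_prime_order 83 41 (by norm_num)
        (by norm_num) 16 (by decide) (by decide) ?_ ?_
      · simp only [eval₂_add, eval₂_sub, eval₂_pow, eval₂_X, eval₂_one]
        decide
      · exact (Nat.add_le_add_right (by compute_degree) 1).trans_lt (by norm_num : 12 + 1 < 41)
end
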